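/- Let T ∈ k(x)^{n×n} be strictly proper with a realisation T = X M^{-1} Y (X, M, Y polynomial matrices, M non-singular), Δ = det M, δ = deg Δ, θ = ∂_x + T, a ∈ k[x]^n with d_a = deg a, and ρ = dim_{k(x)} span(θ^i a : i ≥ 0). Then there exists a nonzero (η_0,…,η_ρ) ∈ k[x]^{ρ+1} with Σ_i η_i θ^i a = 0 and deg η_i ≤ ρ d_a + ρ δ − (ρ(ρ+1)/2 − i) for all 0 ≤ i ≤ ρ. -/

import Mathlib

set_option synthInstance.maxHeartbeats 1000000

open Polynomial

/-- The standard derivative on the rational function field `k(x)`. -/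
noncomputable def ratDeriv {k : Type*} [Field k] (f : RatFunc k) : RatFunc k :=
  algebraMap (Polynomial k) (RatFunc k)
      (derivative f.num * f.denom - f.num * derivative f.denom) /
    (algebraMap (Polynomial k) (RatFunc k) f.denom) ^ 2

/-- The pseudo-linear map `θ = ∂_x + T` on `k(x)^n`. -/
noncomputable def pseudoLin {k : Type*} [Field k] {n : ℕ}
    (T : Matrix (Fin n) (Fin n) (RatFunc k)) (v : Fin n → RatFunc k) : Fin n → RatFunc k :=
  (fun i => ratDeriv (v i)) + T.mulVec v

open Module

/-!
Let `L = k[x]^n`. Since `M` is injective on `k[x]^m` with cokernel of `k`-dimension `δ`, the map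
`T = X M⁻¹ Y` sends `L` into `L + G` with `dim G ≤ δ`. Hence `L + θ L + ⋯ + θ^ρ L`, which contains
all polynomial multiples of the `θ^i a` with `i ≤ ρ`, exceeds `L` by at most `ρ δ` dimensions.

Put `s = ρ d_a + ρ δ` and `t = ρ(ρ+1)/2`. Strict properness makes `θ` lower degrees at infinity by
one, so the combinations `∑ η_i θ^i a` with `deg η_i ≤ s + i` have entries of degree at most
`s + d_a`. They lie in a `k(x)`-space of dimension `ρ`, where `ρ` coordinates determine a vector, so
the polynomial vectors among them form a space of dimension at most `ρ (s + d_a + 1)`. Comparing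
with the `∑ (s + i + 1)` free coefficients leaves a space of relations of dimension greater than
`t`.

The first `ρ` iterates are independent over `k(x)`, so all these relations are proportional and are
determined by their last coefficient. A space of polynomials of dimension greater than `t` contains
two nonzero members whose degrees differ by at least `t`; by proportionality, all the coefficients
of the relation belonging to the smaller one have degree at most `s + i - t`.
-/

section DeterminantDegree

theorem associated_det_prod_smithNormalFormCoeffs {R M ι : Type*} [CommRing R] [IsDomain R]
    [IsPrincipalIdealRing R] [AddCommGroup M] [Module R M] [Fintype ι] (b : Basis ι R M)
    {N : Submodule R M} (e : M ≃ₗ[R] N) (h : finrank R N = finrank R M) :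
    Associated (LinearMap.det (N.subtype ∘ₗ e.toLinearMap))
      (∏ i, Submodule.smithNormalFormCoeffs b h i) := by
  classical
  let b' := Submodule.smithNormalFormTopBasis b h
  let e' : M ≃ₗ[R] N := b'.equiv (Submodule.smithNormalFormBotBasis b h) (Equiv.refl ι)
  have hdiag : N.subtype ∘ₗ e'.toLinearMap =
      Matrix.toLin b' b' (Matrix.diagonal (Submodule.smithNormalFormCoeffs b h)) :=
    b'.ext fun i => by
      simp [e', b', Matrix.toLin_self, Matrix.diagonal_apply,
        Submodule.smithNormalFormBotBasis_def b h]
  rw [← Matrix.det_diagonal, ← LinearMap.det_toLin b', ← hdiag]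
  exact LinearMap.associated_det_comp_equiv _ _ _

variable {k M : Type*} [Field k] [AddCommGroup M] [Module k[X] M] [Module.Free k[X] M]
  [Module.Finite k[X] M] [Module k M] [IsScalarTower k k[X] M]

theorem finiteDimensional_quotient_span_singleton {p : k[X]} (hp : p ≠ 0) :
    FiniteDimensional k (k[X] ⧸ Ideal.span {p}) :=
  (AdjoinRoot.powerBasis hp).finite

theorem finrank_quotient_span_singleton {p : k[X]} (hp : p ≠ 0) :
    finrank k (k[X] ⧸ Ideal.span {p}) = p.natDegree :=
  (AdjoinRoot.powerBasis hp).finrank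

theorem finiteDimensional_quotient_of_finrank_eq {N : Submodule k[X] M}
    (h : finrank k[X] N = finrank k[X] M) : FiniteDimensional k (M ⧸ N) := by
  have b := Module.finBasis k[X] M
  have hfin (i : Fin (finrank k[X] M)) := finiteDimensional_quotient_span_singleton
    (Submodule.smithNormalFormCoeffs_ne_zero b h i)
  exact ((N.quotientEquivPiSpan b h).restrictScalars k).symm.finiteDimensional

theorem finrank_quotient_range_eq_natDegree_det {f : Module.End k[X] M}
    (hf : Function.Injective f) :
    finrank k (M ⧸ LinearMap.range f) = (LinearMap.det f).natDegree := by
  let e := LinearEquiv.ofInjective f hf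
  let b := Module.finBasis k[X] M
  have h := e.finrank_eq.symm
  have hc := Submodule.smithNormalFormCoeffs_ne_zero b h
  have hfin (i : Fin (finrank k[X] M)) := finiteDimensional_quotient_span_singleton (hc i)
  calc finrank k (M ⧸ LinearMap.range f)
      = ∑ i, (Submodule.smithNormalFormCoeffs b h i).natDegree := by
        simp only [Submodule.finrank_quotient_eq_sum k b h, finrank_quotient_span_singleton (hc _)]
    _ = (∏ i, Submodule.smithNormalFormCoeffs b h i).natDegree :=
        (natDegree_prod _ _ fun i _ => hc i).symm
    _ = (LinearMap.det f).natDegree :=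
        (natDegree_eq_of_degree_eq (degree_eq_degree_of_associated
          (associated_det_prod_smithNormalFormCoeffs b e h))).symm

theorem exists_sup_range_eq_top_finrank_eq_natDegree_det {f : Module.End k[X] M}
    (hf : Function.Injective f) :
    ∃ F : Submodule k M, FiniteDimensional k F ∧ finrank k F = (LinearMap.det f).natDegree ∧
      LinearMap.range (f.restrictScalars k) ⊔ F = ⊤ := by
  obtain ⟨F, hF⟩ := (LinearMap.range (f.restrictScalars k)).exists_isCompl
  have e : (M ⧸ LinearMap.range f) ≃ₗ[k] F :=
    Submodule.quotientEquivOfIsCompl (LinearMap.range (f.restrictScalars k)) F hF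
  have := finiteDimensional_quotient_of_finrank_eq (k := k)
    (LinearEquiv.ofInjective f hf).finrank_eq.symm
  exact ⟨F, e.finiteDimensional,
    e.finrank_eq.symm.trans (finrank_quotient_range_eq_natDegree_det hf), hF.sup_eq_top⟩

end DeterminantDegree

section DegreeLT

variable {k : Type*} [Field k]

instance finiteDimensional_degreeLT (d : ℕ) : FiniteDimensional k (degreeLT k d) :=
  (degreeLTEquiv k d).symm.finiteDimensional

theorem finrank_degreeLT (d : ℕ) : finrank k (degreeLT k d) = d :=
  (degreeLTEquiv k d).finrank_eq.trans (finrank_fin_fun k)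

theorem exists_natDegree_add_le_natDegree {U : Submodule k k[X]} {t : ℕ} (ht : t < finrank k U) :
    ∃ p ∈ U, ∃ q ∈ U, p ≠ 0 ∧ q ≠ 0 ∧ p.natDegree + t ≤ q.natDegree := by
  have hU : U ≠ ⊥ := by
    rintro rfl
    simp at ht
  obtain ⟨p, ⟨hpU, hp⟩, hmin⟩ := exists_minimalFor_of_wellFoundedLT
    (fun p => p ∈ U ∧ p ≠ 0) natDegree (U.ne_bot_iff.1 hU)
  set d := p.natDegree
  by_contra! hlt
  have hle : U ⊔ degreeLT k d ≤ degreeLT k (d + t) := by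
    refine sup_le (fun q hq => mem_degreeLT.2 ?_) (degreeLT_mono (Nat.le_add_right d t))
    rcases eq_or_ne q 0 with rfl | hq0
    · simp
    · exact (natDegree_lt_iff_degree_lt hq0).1 (hlt p hpU q hq hp hq0)
  have hinf : U ⊓ degreeLT k d = ⊥ := by
    refine (Submodule.eq_bot_iff _).2 fun q ⟨hqU, hqd⟩ => by_contra fun hq0 => ?_
    have hqd' := (natDegree_lt_iff_degree_lt hq0).2 (mem_degreeLT.1 hqd)
    exact (hmin ⟨hqU, hq0⟩ hqd'.le).not_gt hqd'
  have : FiniteDimensional k U := Module.finite_of_finrank_pos (by omega)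
  have hdim := Submodule.finrank_sup_add_finrank_inf_eq U (degreeLT k d)
  have hdim' := Submodule.finrank_mono hle
  rw [hinf, finrank_bot, finrank_degreeLT] at hdim
  rw [finrank_degreeLT] at hdim'
  omega

end DegreeLT

section Derivation

variable {k : Type*} [Field k]

theorem ratDeriv_div (p : k[X]) {q : k[X]} (hq : q ≠ 0) :
    ratDeriv (algebraMap k[X] (RatFunc k) p / algebraMap k[X] (RatFunc k) q) =
      algebraMap k[X] (RatFunc k) (derivative p * q - p * derivative q) /
        algebraMap k[X] (RatFunc k) q ^ 2 := by
  set f := algebraMap k[X] (RatFunc k) p / algebraMap k[X] (RatFunc k) q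
  have hnum : f.num * q = p * f.denom := (RatFunc.num_mul_eq_mul_denom_iff hq).2 rfl
  have hnum' := congrArg derivative hnum
  rw [derivative_mul, derivative_mul] at hnum'
  rw [ratDeriv, div_eq_div_iff (pow_ne_zero 2 (RatFunc.algebraMap_ne_zero f.denom_ne_zero))
    (pow_ne_zero 2 (RatFunc.algebraMap_ne_zero hq))]
  simp only [← map_pow, ← map_mul]
  refine congrArg (algebraMap k[X] (RatFunc k)) ?_
  linear_combination
    (q * f.denom) * hnum' - (q * derivative f.denom + f.denom * derivative q) * hnum

theorem ratDeriv_algebraMap (p : k[X]) :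
    ratDeriv (algebraMap k[X] (RatFunc k) p) = algebraMap k[X] (RatFunc k) (derivative p) := by
  simpa using ratDeriv_div p one_ne_zero

theorem ratDeriv_add (f g : RatFunc k) : ratDeriv (f + g) = ratDeriv f + ratDeriv g := by
  induction f using RatFunc.induction_on with | f p q hq
  induction g using RatFunc.induction_on with | f r s hs
  have hq' := RatFunc.algebraMap_ne_zero hq
  have hs' := RatFunc.algebraMap_ne_zero hs
  rw [div_add_div _ _ hq' hs', ← map_mul, ← map_mul, ← map_mul, ← map_add,
    ratDeriv_div _ hq, ratDeriv_div _ hs, ratDeriv_div _ (mul_ne_zero hq hs)]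
  simp only [derivative_mul, map_mul, map_add, map_sub]
  field_simp
  ring

theorem ratDeriv_mul (f g : RatFunc k) :
    ratDeriv (f * g) = f * ratDeriv g + g * ratDeriv f := by
  induction f using RatFunc.induction_on with | f p q hq
  induction g using RatFunc.induction_on with | f r s hs
  have hq' := RatFunc.algebraMap_ne_zero hq
  have hs' := RatFunc.algebraMap_ne_zero hs
  rw [div_mul_div_comm, ← map_mul, ← map_mul,
    ratDeriv_div _ hq, ratDeriv_div _ hs, ratDeriv_div _ (mul_ne_zero hq hs)]
  simp only [derivative_mul, map_mul, map_add, map_sub]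
  field_simp
  ring

theorem ratDeriv_smul (c : k) (f : RatFunc k) : ratDeriv (c • f) = c • ratDeriv f := by
  simp only [RatFunc.smul_eq_C_mul, ← RatFunc.algebraMap_C, ratDeriv_mul, ratDeriv_algebraMap,
    derivative_C, map_zero, mul_zero, add_zero]

/-- The derivation `∂_x` of `k(x)`, bundled from `ratDeriv`. -/
noncomputable def ratDerivation (k : Type*) [Field k] : Derivation k (RatFunc k) (RatFunc k) :=
  .mk' { toFun := ratDeriv, map_add' := ratDeriv_add, map_smul' := ratDeriv_smul } ratDeriv_mul

variable {n : ℕ}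

/-- The map `θ = ∂_x + T`, bundled as a `k`-linear endomorphism of `k(x)^n` in order to take images
of `k`-subspaces. -/
noncomputable def pseudoLinEnd (T : Matrix (Fin n) (Fin n) (RatFunc k)) :
    Module.End k (Fin n → RatFunc k) :=
  (ratDerivation k : RatFunc k →ₗ[k] RatFunc k).compLeft (Fin n) + T.mulVecLin.restrictScalars k

theorem coe_pseudoLinEnd (T : Matrix (Fin n) (Fin n) (RatFunc k)) :
    ⇑(pseudoLinEnd T) = pseudoLin T := rfl

theorem pseudoLinEnd_smul (T : Matrix (Fin n) (Fin n) (RatFunc k)) (f : RatFunc k)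
    (v : Fin n → RatFunc k) :
    pseudoLinEnd T (f • v) = ratDeriv f • v + f • pseudoLinEnd T v := by
  ext i
  simp only [coe_pseudoLinEnd, pseudoLin, Matrix.mulVec_smul, Pi.add_apply, Pi.smul_apply,
    smul_eq_mul, ratDeriv_mul]
  ring

theorem pseudoLinEnd_polynomial_smul (T : Matrix (Fin n) (Fin n) (RatFunc k)) (p : k[X])
    (v : Fin n → RatFunc k) :
    pseudoLinEnd T (p • v) = derivative p • v + p • pseudoLinEnd T v := by
  rw [← algebraMap_smul (RatFunc k) p v, pseudoLinEnd_smul, ratDeriv_algebraMap,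
    algebraMap_smul, algebraMap_smul]

end Derivation

section Degree

open scoped WithZero
open WithZero RatFunc

variable {k : Type*} [Field k] [DecidableEq (RatFunc k)]

theorem mem_degreeLT_iff_inftyValuation_lt {p : k[X]} {d : ℕ} :
    p ∈ degreeLT k d ↔ inftyValuation k (algebraMap k[X] (RatFunc k) p) < exp (d : ℤ) := by
  rcases eq_or_ne p 0 with rfl | hp
  · simp
  · rw [mem_degreeLT, ← natDegree_lt_iff_degree_lt hp, inftyValuation_apply,
      inftyValuation.polynomial k hp, exp_lt_exp, Nat.cast_lt]

theorem inftyValuation_algebraMap_mul_lt {p : k[X]} {d : ℕ} (hp : p ∈ degreeLT k d) {f : RatFunc k}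
    {N : ℤ} (hf : inftyValuation k f ≤ exp (N - d)) :
    inftyValuation k (algebraMap k[X] (RatFunc k) p * f) < exp N := by
  calc inftyValuation k (algebraMap k[X] (RatFunc k) p * f)
      ≤ inftyValuation k (algebraMap k[X] (RatFunc k) p) * exp (N - d) := by
        rw [map_mul]
        gcongr
    _ < exp (d : ℤ) * exp (N - d) := by
        gcongr
        · exact exp_pos
        · exact mem_degreeLT_iff_inftyValuation_lt.1 hp
    _ = exp N := by rw [← exp_add, add_sub_cancel]

theorem inftyValuation_algebraMap_le {p : k[X]} {d : ℕ} (hp : p.natDegree ≤ d) :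
    inftyValuation k (algebraMap k[X] (RatFunc k) p) ≤ exp (d : ℤ) := by
  rcases eq_or_ne p 0 with rfl | hp0
  · simp
  · rw [inftyValuation_apply, inftyValuation.polynomial k hp0, exp_le_exp]
    exact_mod_cast hp

theorem inftyValuation_le_of_intDegree_le {f : RatFunc k} {d : ℤ} (hf : f = 0 ∨ f.intDegree ≤ d) :
    inftyValuation k f ≤ exp d := by
  rcases eq_or_ne f 0 with rfl | hf0
  · simp
  · rw [inftyValuation_apply, inftyValuation_of_nonzero k hf0, exp_le_exp]
    exact hf.resolve_left hf0

theorem inftyValuation_derivative_le (p : k[X]) :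
    inftyValuation k (algebraMap k[X] (RatFunc k) (derivative p)) ≤
      exp (-1) * inftyValuation k (algebraMap k[X] (RatFunc k) p) := by
  rcases eq_or_ne (derivative p) 0 with hp' | hp'
  · simp [hp']
  have hp : p ≠ 0 := by
    rintro rfl
    simp at hp'
  rw [inftyValuation_apply, inftyValuation_apply, inftyValuation.polynomial k hp,
    inftyValuation.polynomial k hp', ← exp_add, exp_le_exp]
  have := natDegree_lt_natDegree hp' (degree_derivative_lt hp)
  omega

theorem inftyValuation_ratDeriv_le (f : RatFunc k) :
    inftyValuation k (ratDeriv f) ≤ exp (-1) * inftyValuation k f := by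
  induction f using RatFunc.induction_on with | f p q hq
  have hQ : inftyValuation k (algebraMap k[X] (RatFunc k) q) ≠ 0 :=
    (Valuation.ne_zero_iff _).2 (RatFunc.algebraMap_ne_zero hq)
  have hnum : inftyValuation k
      (algebraMap k[X] (RatFunc k) (derivative p * q - p * derivative q)) ≤
      exp (-1) * inftyValuation k (algebraMap k[X] (RatFunc k) p) *
        inftyValuation k (algebraMap k[X] (RatFunc k) q) := by
    simp only [map_sub, map_mul]
    refine Valuation.map_sub_le _ ?_ ?_
    · rw [map_mul]
      gcongr
      exact inftyValuation_derivative_le p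
    · rw [map_mul, mul_right_comm, mul_comm]
      gcongr
      exact inftyValuation_derivative_le q
  rw [ratDeriv_div p hq, map_div₀, map_div₀, map_pow, div_le_iff₀ (pow_pos (zero_lt_iff.2 hQ) 2)]
  refine hnum.trans_eq ?_
  field_simp

theorem inftyValuation_pseudoLin_le {n : ℕ} {T : Matrix (Fin n) (Fin n) (RatFunc k)}
    (hT : ∀ i j, inftyValuation k (T i j) ≤ exp (-1)) {v : Fin n → RatFunc k} {g : ℤᵐ⁰}
    (hv : ∀ i, inftyValuation k (v i) ≤ g) (i : Fin n) :
    inftyValuation k (pseudoLin T v i) ≤ exp (-1) * g := by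
  have hmul : inftyValuation k (∑ j, T i j * v j) ≤ exp (-1) * g :=
    Valuation.map_sum_le _ fun j _ => (map_mul _ _ _).trans_le (mul_le_mul' (hT i j) (hv j))
  exact Valuation.map_add_le _
    ((inftyValuation_ratDeriv_le (v i)).trans (mul_le_mul_right (hv i) _)) hmul

theorem inftyValuation_iterate_pseudoLin_le {n : ℕ} {T : Matrix (Fin n) (Fin n) (RatFunc k)}
    (hT : ∀ i j, inftyValuation k (T i j) ≤ exp (-1)) {v : Fin n → RatFunc k} {d : ℤ}
    (hv : ∀ i, inftyValuation k (v i) ≤ exp d) (j : ℕ) (i : Fin n) :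
    inftyValuation k ((pseudoLin T)^[j] v i) ≤ exp (d - j) := by
  induction j generalizing i with
  | zero => simpa using hv i
  | succ j ih =>
    rw [Function.iterate_succ_apply']
    refine (inftyValuation_pseudoLin_le hT ih i).trans_eq ?_
    rw [← exp_add, Nat.cast_succ, neg_add_eq_sub, sub_sub]

end Degree

section IteratedSum

variable {k V : Type*} [Ring k] [AddCommGroup V] [Module k V]

/-- The sum `L + θ L + ⋯ + θ ^ j L` of the first iterated images of a submodule `L` under an
endomorphism `θ`, in Horner form. -/
def iterSup (θ : Module.End k V) (L : Submodule k V) : ℕ → Submodule k V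
  | 0 => L
  | j + 1 => L ⊔ (iterSup θ L j).map θ

theorem le_iterSup (θ : Module.End k V) (L : Submodule k V) (j : ℕ) : L ≤ iterSup θ L j := by
  cases j with
  | zero => exact le_rfl
  | succ j => exact le_sup_left

theorem iterSup_mono (θ : Module.End k V) (L : Submodule k V) : Monotone (iterSup θ L) := by
  refine monotone_nat_of_le_succ fun j => ?_
  induction j with
  | zero => exact le_iterSup θ L 1
  | succ j ih => exact sup_le_sup_left (Submodule.map_mono ih) L

theorem iterate_mem_iterSup (θ : Module.End k V) {L : Submodule k V} {v : V} (hv : v ∈ L) (j : ℕ) :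
    θ^[j] v ∈ iterSup θ L j := by
  induction j with
  | zero => exact hv
  | succ j ih =>
    rw [Function.iterate_succ_apply']
    exact Submodule.mem_sup_right (Submodule.mem_map_of_mem ih)

theorem smul_mem_iterSup {R : Type*} [Ring R] [Module R V] {D : R → R} {θ : Module.End k V}
    (hθ : ∀ (r : R) (v : V), θ (r • v) = D r • v + r • θ v) {L : Submodule k V}
    (hL : ∀ (r : R), ∀ v ∈ L, r • v ∈ L) {j : ℕ} (r : R) {v : V} (hv : v ∈ iterSup θ L j) :
    r • v ∈ iterSup θ L j := by
  induction j generalizing r v with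
  | zero => exact hL r v hv
  | succ j ih =>
    obtain ⟨l, hl, _, ⟨w, hw, rfl⟩, rfl⟩ := Submodule.mem_sup.1 hv
    have hθw : r • θ w = θ (r • w) - D r • w := by rw [hθ, add_sub_cancel_left]
    rw [smul_add, hθw]
    exact add_mem (le_iterSup θ L _ (hL r l hl)) (sub_mem
      (Submodule.mem_sup_right (Submodule.mem_map_of_mem (ih r hw)))
      (iterSup_mono θ L j.le_succ (ih (D r) hw)))

end IteratedSum

section Finrank

variable {k V W : Type*} [Field k] [AddCommGroup V] [Module k V] [AddCommGroup W] [Module k W]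

theorem exists_iterSup_le_sup {θ : Module.End k V} {L G : Submodule k V} [FiniteDimensional k G]
    (h : L.map θ ≤ L ⊔ G) (j : ℕ) :
    ∃ G' : Submodule k V, FiniteDimensional k G' ∧ finrank k G' ≤ j * finrank k G ∧
      iterSup θ L j ≤ L ⊔ G' := by
  induction j with
  | zero => exact ⟨⊥, inferInstance, by simp, le_sup_left⟩
  | succ j ih =>
    obtain ⟨G', _, hfin, hle⟩ := ih
    refine ⟨G ⊔ G'.map θ, inferInstance, ?_, sup_le le_sup_left ?_⟩
    · calc finrank k ↥(G ⊔ G'.map θ)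
          ≤ finrank k G + finrank k (G'.map θ) := Submodule.finrank_add_le_finrank_add_finrank _ _
        _ ≤ finrank k G + j * finrank k G := by grw [Submodule.finrank_map_le, hfin]
        _ = (j + 1) * finrank k G := by ring
    · calc (iterSup θ L j).map θ
          ≤ L.map θ ⊔ G'.map θ := (Submodule.map_mono hle).trans_eq (Submodule.map_sup _ _ _)
        _ ≤ (L ⊔ G) ⊔ G'.map θ := sup_le_sup_right h _
        _ = L ⊔ (G ⊔ G'.map θ) := sup_assoc _ _ _

theorem finrank_map_add_finrank_inf_ker (f : V →ₗ[k] W) (P : Submodule k V)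
    [FiniteDimensional k P] :
    finrank k (P.map f) + finrank k ↥(P ⊓ LinearMap.ker f) = finrank k P := by
  rw [← Submodule.map_comap_subtype, Submodule.finrank_map_subtype_eq,
    ← LinearMap.range_domRestrict]
  exact LinearMap.finrank_range_add_finrank_ker (f.domRestrict P)

theorem finrank_le_finrank_inf_add_finrank {P L G : Submodule k V} [FiniteDimensional k P]
    [FiniteDimensional k G] (h : P ≤ L ⊔ G) :
    finrank k P ≤ finrank k ↥(P ⊓ L) + finrank k G := by
  have hmap : P.map L.mkQ ≤ G.map L.mkQ := by
    simpa [Submodule.map_sup] using Submodule.map_mono (f := L.mkQ) h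
  calc finrank k P = finrank k (P.map L.mkQ) + finrank k ↥(P ⊓ L) := by
        rw [← finrank_map_add_finrank_inf_ker L.mkQ P, L.ker_mkQ]
    _ ≤ finrank k G + finrank k ↥(P ⊓ L) := by
        grw [Submodule.finrank_mono hmap, Submodule.finrank_map_le]
    _ = finrank k ↥(P ⊓ L) + finrank k G := add_comm _ _

theorem exists_finset_card_le_finrank_eq_zero_of_forall_mem {ι : Type*} [Finite ι]
    (V : Submodule k (ι → k)) :
    ∃ s : Finset ι, s.card ≤ finrank k V ∧ ∀ v ∈ V, (∀ i ∈ s, v i = 0) → v = 0 := by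
  classical
  let coord (i : ι) : Dual k V := LinearMap.proj i ∘ₗ V.subtype
  obtain ⟨κ, a, ha, hspan, hli⟩ := exists_linearIndependent' k coord
  have : Finite κ := Finite.of_injective a ha
  have := Fintype.ofFinite κ
  refine ⟨Finset.univ.image a, Finset.card_image_le.trans ?_, fun v hv hzero => funext fun i => ?_⟩
  · exact hli.fintype_card_le_finrank.trans_eq Subspace.dual_finrank_eq
  · have hle : Submodule.span k (Set.range (coord ∘ a)) ≤
        LinearMap.ker (Dual.eval k V ⟨v, hv⟩) :=
      Submodule.span_le.2 <| Set.range_subset_iff.2 fun j =>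
        hzero (a j) (Finset.mem_image_of_mem a (Finset.mem_univ j))
    exact hle (hspan.symm ▸ Submodule.subset_span (Set.mem_range_self i))

end Finrank

section Independence

variable {K V : Type*} [Field K] [AddCommGroup V] [Module K V] {θ : V →+ V} {D : K → K}

theorem mem_span_of_pseudolinear (hθ : ∀ (c : K) (v : V), θ (c • v) = D c • v + c • θ v)
    {S : Set V} (hS : ∀ v ∈ S, θ v ∈ Submodule.span K S) {v : V} (hv : v ∈ Submodule.span K S) :
    θ v ∈ Submodule.span K S := by
  induction hv using Submodule.span_induction with
  | mem v hv => exact hS v hv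
  | zero => exact (map_zero θ).symm ▸ zero_mem _
  | add v w _ _ hv hw => exact (map_add θ v w).symm ▸ add_mem hv hw
  | smul c v hvS hv =>
    exact (hθ c v).symm ▸ add_mem (Submodule.smul_mem _ _ hvS) (Submodule.smul_mem _ _ hv)

theorem span_range_iterate_le (hθ : ∀ (c : K) (v : V), θ (c • v) = D c • v + c • θ v) {v : V}
    {j : ℕ} (hj : θ^[j] v ∈ Submodule.span K (Set.range fun i : Fin j => θ^[i] v)) :
    Submodule.span K (Set.range fun i : ℕ => θ^[i] v) ≤
      Submodule.span K (Set.range fun i : Fin j => θ^[i] v) := by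
  set U := Submodule.span K (Set.range fun i : Fin j => θ^[i] v)
  have hlt {i : ℕ} (hi : i < j) : θ^[i] v ∈ U := Submodule.subset_span ⟨⟨i, hi⟩, rfl⟩
  have hle {i : ℕ} (hi : i ≤ j) : θ^[i] v ∈ U := hi.lt_or_eq.elim hlt (· ▸ hj)
  have hgen : ∀ w ∈ Set.range fun i : Fin j => θ^[i] v, θ w ∈ U := by
    rintro _ ⟨i, rfl⟩
    simpa only [← Function.iterate_succ_apply' θ] using hle i.isLt
  refine Submodule.span_le.2 (Set.range_subset_iff.2 fun i => ?_)
  induction i with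
  | zero => exact hle j.zero_le
  | succ i ih => exact Function.iterate_succ_apply' θ i v ▸ mem_span_of_pseudolinear hθ hgen ih

theorem linearIndependent_iterate (hθ : ∀ (c : K) (v : V), θ (c • v) = D c • v + c • θ v) {v : V}
    {j : ℕ} (hj : j ≤ finrank K (Submodule.span K (Set.range fun i : ℕ => θ^[i] v))) :
    LinearIndependent K fun i : Fin j => θ^[i] v := by
  induction j with
  | zero => exact linearIndependent_empty_type
  | succ j ih =>
    refine linearIndependent_finSucc'.2 ⟨ih (j.le_succ.trans hj), fun hmem => ?_⟩
    have := FiniteDimensional.span_of_finite K (Set.finite_range fun i : Fin j => θ^[i] v)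
    have hcard := finrank_range_le_card (R := K) fun i : Fin j => θ^[i] v
    have hmono := Submodule.finrank_mono (span_range_iterate_le hθ hmem)
    rw [Set.finrank, Fintype.card_fin] at hcard
    omega

end Independence

section Relations

variable {R V : Type*} [CommRing R] [AddCommGroup V] [Module R V] {ρ : ℕ} {v : Fin (ρ + 1) → V}

theorem eq_zero_of_apply_last_eq_zero (hv : LinearIndependent R fun i : Fin ρ => v i.castSucc)
    {η : Fin (ρ + 1) → R} (hη : ∑ i, η i • v i = 0) (hlast : η (Fin.last ρ) = 0) : η = 0 := by
  rw [Fin.sum_univ_castSucc, hlast, zero_smul, add_zero] at hη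
  exact funext (Fin.lastCases hlast (Fintype.linearIndependent_iff.1 hv _ hη))

theorem apply_last_smul_eq_apply_last_smul
    (hv : LinearIndependent R fun i : Fin ρ => v i.castSucc) {η ζ : Fin (ρ + 1) → R}
    (hη : ∑ i, η i • v i = 0) (hζ : ∑ i, ζ i • v i = 0) :
    ζ (Fin.last ρ) • η = η (Fin.last ρ) • ζ := by
  refine sub_eq_zero.1 (eq_zero_of_apply_last_eq_zero hv ?_ ?_)
  · simp only [Pi.sub_apply, Pi.smul_apply, smul_assoc, sub_smul, Finset.sum_sub_distrib,
      ← Finset.smul_sum, hη, hζ, smul_zero, sub_zero]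
  · simp [mul_comm]

end Relations

section PolynomialVectors

open scoped Matrix

variable (k : Type*) [Field k] (ι : Type*)

/-- The inclusion of the polynomial vectors `k[x]^ι` into `k(x)^ι`. -/
noncomputable def polyVec : (ι → k[X]) →ₗ[k[X]] (ι → RatFunc k) :=
  (Algebra.linearMap k[X] (RatFunc k)).compLeft ι

/-- The lattice `k[x]^ι` inside `k(x)^ι`. It is encoded as a `k`-subspace, not as a
`k[x]`-submodule, because `θ` is only `k`-linear. -/
noncomputable def polyLattice : Submodule k (ι → RatFunc k) :=
  LinearMap.range ((polyVec k ι).restrictScalars k)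

variable {k ι}

theorem polyVec_injective : Function.Injective (polyVec k ι) :=
  (RatFunc.algebraMap_injective k).comp_left

theorem polyVec_mem_polyLattice (p : ι → k[X]) : polyVec k ι p ∈ polyLattice k ι :=
  LinearMap.mem_range_self ((polyVec k ι).restrictScalars k) p

theorem smul_mem_polyLattice (p : k[X]) {v : ι → RatFunc k} (hv : v ∈ polyLattice k ι) :
    p • v ∈ polyLattice k ι := by
  obtain ⟨q, rfl⟩ := hv
  exact ⟨p • q, map_smul (polyVec k ι) p q⟩

theorem map_algebraMap_mulVec_polyVec {κ : Type*} [Fintype κ] (A : Matrix ι κ k[X]) (p : κ → k[X]) :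
    A.map (algebraMap k[X] (RatFunc k)) *ᵥ polyVec k κ p = polyVec k ι (A *ᵥ p) :=
  funext fun i => (RingHom.map_mulVec (algebraMap k[X] (RatFunc k)) A p i).symm

theorem exists_mulVec_polyVec_mem_sup {κ ν : Type*} [Fintype κ] [DecidableEq κ] [Fintype ν]
    (X : Matrix ι κ k[X]) {M : Matrix κ κ k[X]} (hM : M.det ≠ 0) (Y : Matrix κ ν k[X]) :
    ∃ G : Submodule k (ι → RatFunc k), FiniteDimensional k G ∧
      finrank k G ≤ M.det.natDegree ∧ ∀ p : ν → k[X],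
        (X.map (algebraMap k[X] (RatFunc k)) * (M.map (algebraMap k[X] (RatFunc k)))⁻¹ *
          Y.map (algebraMap k[X] (RatFunc k))) *ᵥ polyVec k ν p ∈ polyLattice k ι ⊔ G := by
  set X' := X.map (algebraMap k[X] (RatFunc k))
  set M' := M.map (algebraMap k[X] (RatFunc k)) with hM'
  have hdet : IsUnit M'.det := by
    rw [hM', ← RingHom.mapMatrix_apply, ← RingHom.map_det]
    exact (RatFunc.algebraMap_ne_zero hM).isUnit
  obtain ⟨F, hfin, hrank, htop⟩ := exists_sup_range_eq_top_finrank_eq_natDegree_det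
    (k := k) (f := Matrix.toLin' M) (Matrix.mulVec_injective_of_det_ne_zero hM)
  rw [LinearMap.det_toLin'] at hrank
  let φ : (κ → k[X]) →ₗ[k] (ι → RatFunc k) :=
    ((X' * M'⁻¹).mulVecLin.restrictScalars k) ∘ₗ (polyVec k κ).restrictScalars k
  refine ⟨F.map φ, inferInstance, (Submodule.finrank_map_le φ F).trans_eq hrank, fun p => ?_⟩
  obtain ⟨_, ⟨w, rfl⟩, f, hf, hwf⟩ := Submodule.mem_sup.1 (htop ▸ Submodule.mem_top : Y *ᵥ p ∈ _)
  have hφ : φ (M *ᵥ w) = polyVec k ι (X *ᵥ w) := by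
    change (X' * M'⁻¹) *ᵥ polyVec k κ (M *ᵥ w) = _
    rw [← map_algebraMap_mulVec_polyVec, ← map_algebraMap_mulVec_polyVec, Matrix.mulVec_mulVec,
      Matrix.nonsing_inv_mul_cancel_right _ _ hdet]
  rw [← Matrix.mulVec_mulVec, map_algebraMap_mulVec_polyVec]
  change φ (Y *ᵥ p) ∈ _
  rw [← hwf, map_add]
  exact Submodule.add_mem_sup (hφ ▸ polyVec_mem_polyLattice _) (Submodule.mem_map_of_mem hf)

end PolynomialVectors

section BoundedRelations

variable {k W κ : Type*} [Field k]

/-- The space of polynomial vectors `η` with `deg η_i < d_i` for all `i`. -/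
noncomputable def boundedVectors (k : Type*) [Field k] (d : κ → ℕ) : Submodule k (κ → k[X]) :=
  Submodule.pi Set.univ fun i => degreeLT k (d i)

/-- The identification of `boundedVectors k d` with a product of spaces of polynomials of bounded
degree, which gives its dimension. -/
noncomputable def boundedVectorsEquiv (k : Type*) [Field k] (d : κ → ℕ) :
    boundedVectors k d ≃ₗ[k] ((i : κ) → degreeLT k (d i)) where
  toFun η i := ⟨η.1 i, η.2 i trivial⟩
  map_add' _ _ := rfl
  map_smul' _ _ := rfl
  invFun η := ⟨fun i => η i, fun i _ => (η i).2⟩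
  left_inv _ := rfl
  right_inv _ := rfl

instance [Finite κ] (d : κ → ℕ) : FiniteDimensional k (boundedVectors k d) :=
  (boundedVectorsEquiv k d).symm.finiteDimensional

theorem finrank_boundedVectors [Fintype κ] (d : κ → ℕ) :
    finrank k (boundedVectors k d) = ∑ i, d i := by
  rw [(boundedVectorsEquiv k d).finrank_eq, Module.finrank_pi_fintype]
  simp only [finrank_degreeLT]

variable [AddCommGroup W] [Module k[X] W] [Module k W] [IsScalarTower k k[X] W] [Fintype κ]

variable (k) in
/-- The `k`-space of polynomial relations `∑ η_i v_i = 0` with `deg η_i < d_i` for all `i`. -/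
noncomputable def boundedRelations (v : κ → W) (d : κ → ℕ) : Submodule k (κ → k[X]) :=
  boundedVectors k d ⊓ LinearMap.ker ((Fintype.linearCombination k[X] v).restrictScalars k)

theorem mem_boundedRelations {v : κ → W} {d : κ → ℕ} {η : κ → k[X]} :
    η ∈ boundedRelations k v d ↔ (∀ i, η i ∈ degreeLT k (d i)) ∧ ∑ i, η i • v i = 0 := by
  simp [boundedRelations, boundedVectors, Submodule.mem_pi, Fintype.linearCombination_apply]

end BoundedRelations

section Valuation

open scoped WithZero
open WithZero RatFunc

variable {k ι κ : Type*} [Field k] [DecidableEq (RatFunc k)]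

theorem finrank_inf_polyLattice_le [Finite ι] {P : Submodule k (ι → RatFunc k)}
    {V : Submodule (RatFunc k) (ι → RatFunc k)} (hPV : P ≤ V.restrictScalars k) {N : ℕ}
    (hN : ∀ v ∈ P, ∀ i, inftyValuation k (v i) < exp (N : ℤ)) :
    finrank k ↥(P ⊓ polyLattice k ι) ≤ finrank (RatFunc k) V * N := by
  obtain ⟨s, hs, hzero⟩ := exists_finset_card_le_finrank_eq_zero_of_forall_mem V
  let U : Submodule k (ι → k[X]) := P.comap ((polyVec k ι).restrictScalars k)
  let coord : U →ₗ[k] (s → degreeLT k N) := LinearMap.pi fun i =>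
    (LinearMap.proj (i : ι) ∘ₗ U.subtype).codRestrict (degreeLT k N) fun u =>
      mem_degreeLT_iff_inftyValuation_lt.2 (hN _ u.2 i)
  have hcoord : Function.Injective coord := by
    refine (injective_iff_map_eq_zero coord).2 fun u hu => Subtype.ext ?_
    refine polyVec_injective ((hzero _ (hPV u.2) fun i hi => ?_).trans (map_zero _).symm)
    have hui : (u : ι → k[X]) i = 0 := congrArg Subtype.val (congrFun hu ⟨i, hi⟩)
    exact (congrArg (algebraMap k[X] (RatFunc k)) hui).trans (map_zero _)
  calc finrank k ↥(P ⊓ polyLattice k ι)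
      = finrank k (U.map ((polyVec k ι).restrictScalars k)) := by
        rw [Submodule.map_comap_eq, inf_comm, polyLattice]
    _ = finrank k U :=
        (Submodule.equivMapOfInjective ((polyVec k ι).restrictScalars k) polyVec_injective
          U).finrank_eq.symm
    _ ≤ finrank k (s → degreeLT k N) := LinearMap.finrank_le_finrank_of_injective hcoord
    _ = s.card * N := by
        simp only [Module.finrank_pi_fintype, finrank_degreeLT, Finset.sum_const, Finset.card_univ,
          Fintype.card_coe, smul_eq_mul]
    _ ≤ finrank (RatFunc k) V * N := Nat.mul_le_mul_right N hs

theorem sum_le_finrank_boundedRelations_add [Finite ι] [Fintype κ] {v : κ → ι → RatFunc k}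
    {V : Submodule (RatFunc k) (ι → RatFunc k)} (hV : ∀ i, v i ∈ V)
    {G : Submodule k (ι → RatFunc k)} [FiniteDimensional k G]
    (hG : ∀ (p : k[X]) i, p • v i ∈ polyLattice k ι ⊔ G) {d : κ → ℕ} {N : ℕ}
    (hN : ∀ i j, inftyValuation k (v i j) ≤ exp ((N : ℤ) - d i)) :
    ∑ i, d i ≤ finrank k (boundedRelations k v d) + finrank (RatFunc k) V * N + finrank k G := by
  set Φ := (Fintype.linearCombination k[X] v).restrictScalars k
  have hΦ (η : κ → k[X]) : Φ η = ∑ i, η i • v i := Fintype.linearCombination_apply _ _ _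
  set P := (boundedVectors k d).map Φ
  have hPV : P ≤ V.restrictScalars k := by
    rintro _ ⟨η, -, rfl⟩
    rw [hΦ]
    exact sum_mem fun i _ => algebraMap_smul (RatFunc k) (η i) (v i) ▸ V.smul_mem _ (hV i)
  have hPG : P ≤ polyLattice k ι ⊔ G := by
    rintro _ ⟨η, -, rfl⟩
    rw [hΦ]
    exact sum_mem fun i _ => hG (η i) i
  have hPN : ∀ w ∈ P, ∀ j, inftyValuation k (w j) < exp (N : ℤ) := by
    rintro _ ⟨η, hη, rfl⟩ j
    rw [hΦ, Finset.sum_apply]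
    refine Valuation.map_sum_lt _ exp_ne_zero fun i _ => ?_
    rw [Pi.smul_apply, Algebra.smul_def]
    exact inftyValuation_algebraMap_mul_lt (hη i trivial) (hN i j)
  calc ∑ i, d i = finrank k P + finrank k (boundedRelations k v d) := by
        rw [← finrank_boundedVectors (k := k), ← finrank_map_add_finrank_inf_ker Φ]
        rfl
    _ ≤ (finrank k ↥(P ⊓ polyLattice k ι) + finrank k G) + finrank k (boundedRelations k v d) := by
        grw [finrank_le_finrank_inf_add_finrank hPG]
    _ ≤ (finrank (RatFunc k) V * N + finrank k G) + finrank k (boundedRelations k v d) := by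
        grw [finrank_inf_polyLattice_le hPV hPN]
    _ = finrank k (boundedRelations k v d) + finrank (RatFunc k) V * N + finrank k G := by ring

end Valuation

section DegreeGap

variable {k W : Type*} [Field k] [AddCommGroup W] [Module k[X] W] [Module k W]
  [IsScalarTower k k[X] W] {ρ : ℕ} {v : Fin (ρ + 1) → W}

theorem finrank_map_proj_last_boundedRelations
    (hv : LinearIndependent k[X] fun i : Fin ρ => v i.castSucc) (d : Fin (ρ + 1) → ℕ) :
    finrank k ((boundedRelations k v d).map (LinearMap.proj (Fin.last ρ))) =
      finrank k (boundedRelations k v d) := by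
  have hinf : boundedRelations k v d ⊓ LinearMap.ker (LinearMap.proj (Fin.last ρ)) = ⊥ :=
    (Submodule.eq_bot_iff _).2 fun η ⟨hη, hlast⟩ =>
      eq_zero_of_apply_last_eq_zero hv (mem_boundedRelations.1 hη).2 hlast
  have : FiniteDimensional k (boundedRelations k v d) :=
    Submodule.finiteDimensional_of_le inf_le_left
  rw [← finrank_map_add_finrank_inf_ker (LinearMap.proj (Fin.last ρ)) (boundedRelations k v d),
    hinf, finrank_bot, add_zero]

theorem exists_relation_natDegree_add_lt
    (hv : LinearIndependent k[X] fun i : Fin ρ => v i.castSucc) {d : Fin (ρ + 1) → ℕ} {t : ℕ}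
    (ht : t < finrank k (boundedRelations k v d)) :
    ∃ η : Fin (ρ + 1) → k[X], η ≠ 0 ∧ ∑ i, η i • v i = 0 ∧
      ∀ i, η i ≠ 0 → (η i).natDegree + t < d i := by
  rw [← finrank_map_proj_last_boundedRelations hv] at ht
  obtain ⟨_, ⟨η, hη, rfl⟩, _, ⟨ζ, hζ, rfl⟩, hη0, hζ0, hgap⟩ := exists_natDegree_add_le_natDegree ht
  rw [LinearMap.proj_apply] at hη0 hζ0
  obtain ⟨-, hη⟩ := mem_boundedRelations.1 hη
  obtain ⟨hζd, hζ⟩ := mem_boundedRelations.1 hζ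
  refine ⟨η, fun h => hη0 (congrFun h _), hη, fun i hi => ?_⟩
  have hprop : ζ (Fin.last ρ) * η i = η (Fin.last ρ) * ζ i :=
    congrFun (apply_last_smul_eq_apply_last_smul hv hη hζ) i
  have hζi : ζ i ≠ 0 := right_ne_zero_of_mul (hprop ▸ mul_ne_zero hζ0 hi)
  have hdeg := congrArg natDegree hprop
  rw [natDegree_mul hζ0 hi, natDegree_mul hη0 hζi] at hdeg
  have hlt := (natDegree_lt_iff_degree_lt hζi).2 (mem_degreeLT.1 (hζd i))
  simp only [LinearMap.proj_apply] at hgap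
  omega

end DegreeGap

theorem sum_fin_succ_add (s ρ : ℕ) :
    ∑ i : Fin (ρ + 1), (s + i + 1) = (ρ + 1) * (s + 1) + ρ * (ρ + 1) / 2 := by
  simp only [Finset.sum_add_distrib, Finset.sum_const, Finset.card_univ,
    Fintype.card_fin, smul_eq_mul]
  rw [Fin.sum_univ_eq_sum_range (fun i => i), Finset.sum_range_id, Nat.add_sub_cancel, mul_comm ρ]
  ring

section Realisation

variable {k : Type*} [Field k] {n : ℕ} {T : Matrix (Fin n) (Fin n) (RatFunc k)} {ν : Type*}
  [Fintype ν] [DecidableEq ν] {X : Matrix (Fin n) ν k[X]} {M : Matrix ν ν k[X]}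
  {Y : Matrix ν (Fin n) k[X]}

theorem exists_map_pseudoLinEnd_polyLattice_le (hM : M.det ≠ 0)
    (hT : T = X.map (algebraMap k[X] (RatFunc k)) * (M.map (algebraMap k[X] (RatFunc k)))⁻¹ *
      Y.map (algebraMap k[X] (RatFunc k))) :
    ∃ G : Submodule k (Fin n → RatFunc k), FiniteDimensional k G ∧
      finrank k G ≤ M.det.natDegree ∧
      (polyLattice k (Fin n)).map (pseudoLinEnd T) ≤ polyLattice k (Fin n) ⊔ G := by
  obtain ⟨G, hfin, hrank, hG⟩ := exists_mulVec_polyVec_mem_sup X hM Y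
  refine ⟨G, hfin, hrank, ?_⟩
  rintro _ ⟨_, ⟨p, rfl⟩, rfl⟩
  have hderiv : (fun i => ratDeriv (polyVec k (Fin n) p i)) =
      polyVec k (Fin n) fun i => derivative (p i) :=
    funext fun i => ratDeriv_algebraMap (p i)
  change (fun i => ratDeriv (polyVec k (Fin n) p i)) + T.mulVec (polyVec k (Fin n) p) ∈ _
  rw [hderiv]
  exact add_mem (Submodule.mem_sup_left (polyVec_mem_polyLattice _)) (hT ▸ hG p)

theorem exists_smul_iterate_pseudoLin_mem_sup (hM : M.det ≠ 0)
    (hT : T = X.map (algebraMap k[X] (RatFunc k)) * (M.map (algebraMap k[X] (RatFunc k)))⁻¹ *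
      Y.map (algebraMap k[X] (RatFunc k))) (a : Fin n → k[X]) (ρ : ℕ) :
    ∃ G : Submodule k (Fin n → RatFunc k), FiniteDimensional k G ∧
      finrank k G ≤ ρ * M.det.natDegree ∧ ∀ (p : k[X]), ∀ i ≤ ρ,
        p • (pseudoLin T)^[i] (polyVec k (Fin n) a) ∈ polyLattice k (Fin n) ⊔ G := by
  obtain ⟨G, _, hrank, hG⟩ := exists_map_pseudoLinEnd_polyLattice_le hM hT
  obtain ⟨G', hfin, hrank', hG'⟩ := exists_iterSup_le_sup hG ρ
  refine ⟨G', hfin, hrank'.trans (Nat.mul_le_mul_left ρ hrank), fun p i hi => hG' ?_⟩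
  refine smul_mem_iterSup (pseudoLinEnd_polynomial_smul T) (fun p _ => smul_mem_polyLattice p) p ?_
  exact iterSup_mono _ _ hi (iterate_mem_iterSup _ (polyVec_mem_polyLattice a) i)

theorem linearIndependent_iterate_pseudoLin {v : Fin n → RatFunc k} {ρ : ℕ}
    (hρ : ρ ≤ finrank (RatFunc k)
      (Submodule.span (RatFunc k) (Set.range fun i : ℕ => (pseudoLin T)^[i] v))) :
    LinearIndependent k[X] fun i : Fin ρ => (pseudoLin T)^[i] v :=
  LinearIndependent.restrict_scalars' k[X] <|
    linearIndependent_iterate (θ := (pseudoLinEnd T).toAddMonoidHom) (pseudoLinEnd_smul T) hρ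

theorem lt_finrank_boundedRelations_iterate_pseudoLin
    (hsp : ∀ i j, T i j = 0 ∨ (T i j).intDegree < 0) (hM : M.det ≠ 0)
    (hT : T = X.map (algebraMap k[X] (RatFunc k)) * (M.map (algebraMap k[X] (RatFunc k)))⁻¹ *
      Y.map (algebraMap k[X] (RatFunc k)))
    {a : Fin n → k[X]} {da : ℕ} (hda : ∀ j, (a j).natDegree ≤ da) {ρ : ℕ}
    (hρ : ρ = finrank (RatFunc k) (Submodule.span (RatFunc k)
      (Set.range fun i : ℕ => (pseudoLin T)^[i] (polyVec k (Fin n) a)))) :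
    ρ * (ρ + 1) / 2 < finrank k (boundedRelations k
      (fun i : Fin (ρ + 1) => (pseudoLin T)^[i] (polyVec k (Fin n) a))
      fun i => ρ * da + ρ * M.det.natDegree + i + 1) := by
  classical
  set s := ρ * da + ρ * M.det.natDegree with hs
  obtain ⟨G, _, hrank, hG⟩ := exists_smul_iterate_pseudoLin_mem_sup hM hT a ρ
  have hdeg (i : Fin (ρ + 1)) (j : Fin n) :
      RatFunc.inftyValuation k ((pseudoLin T)^[i] (polyVec k (Fin n) a) j) ≤
        WithZero.exp (((s + da + 1 : ℕ) : ℤ) - (s + i + 1 : ℕ)) := by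
    refine (inftyValuation_iterate_pseudoLin_le
      (fun i j => inftyValuation_le_of_intDegree_le ((hsp i j).imp_right Int.le_sub_one_of_lt))
      (fun j => inftyValuation_algebraMap_le (hda j)) i j).trans_eq (congrArg WithZero.exp ?_)
    push_cast
    ring
  have hspan (i : Fin (ρ + 1)) : (pseudoLin T)^[i] (polyVec k (Fin n) a) ∈
      Submodule.span (RatFunc k)
        (Set.range fun i : ℕ => (pseudoLin T)^[i] (polyVec k (Fin n) a)) :=
    Submodule.subset_span (Set.mem_range_self (i : ℕ))
  have hcount := sum_le_finrank_boundedRelations_add hspan (fun p i => hG p i i.is_le) hdeg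
  rw [← hρ, sum_fin_succ_add] at hcount
  linarith

end Realisation

theorem exists_relation_realisation_bound_general {k : Type*} [Field k] {n : ℕ} {ν : Type*}
    [Fintype ν] [DecidableEq ν] {T : Matrix (Fin n) (Fin n) (RatFunc k)}
    (hsp : ∀ i j, T i j = 0 ∨ (T i j).intDegree < 0)
    {X : Matrix (Fin n) ν k[X]} {M : Matrix ν ν k[X]} {Y : Matrix ν (Fin n) k[X]}
    (hM : M.det ≠ 0)
    (hT : T = X.map (algebraMap k[X] (RatFunc k)) * (M.map (algebraMap k[X] (RatFunc k)))⁻¹ *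
      Y.map (algebraMap k[X] (RatFunc k)))
    {a : Fin n → k[X]} {da : ℕ} (hda : ∀ j, (a j).natDegree ≤ da) {ρ : ℕ}
    (hρ : ρ = finrank (RatFunc k) (Submodule.span (RatFunc k)
      (Set.range fun i : ℕ => (pseudoLin T)^[i] (polyVec k (Fin n) a)))) :
    ∃ η : Fin (ρ + 1) → k[X], η ≠ 0 ∧
      ∑ i, η i • (pseudoLin T)^[(i : ℕ)] (polyVec k (Fin n) a) = 0 ∧
      ∀ i, η i ≠ 0 → (η i).natDegree + ρ * (ρ + 1) / 2 ≤
        ρ * da + ρ * M.det.natDegree + i := by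
  obtain ⟨η, hη0, hη, hlt⟩ := exists_relation_natDegree_add_lt
    (v := fun i : Fin (ρ + 1) => (pseudoLin T)^[i] (polyVec k (Fin n) a))
    (linearIndependent_iterate_pseudoLin hρ.le)
    (lt_finrank_boundedRelations_iterate_pseudoLin hsp hM hT hda hρ)
  exact ⟨η, hη0, hη, fun i hi => Nat.le_of_lt_succ (hlt i hi)⟩

/-- Main degree bound: if `T` is strictly proper with a realisation `T = X M⁻¹ Y`,
`Δ = det M`, `δ = deg Δ`, `θ = ∂_x + T`, `a ∈ k[x]^n` of degree at most `d_a`, and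
`ρ = dim span(θ^i a : i ≥ 0)`, then there is a nonzero tuple `(η_0, …, η_ρ)` of
polynomials with `∑ η_i θ^i a = 0` and `deg η_i ≤ ρ d_a + ρ δ - (ρ(ρ+1)/2 - i)`. -/
theorem exists_relation_realisation_bound (k : Type*) [Field k] [CharZero k] (n m : ℕ)
    (T : Matrix (Fin n) (Fin n) (RatFunc k))
    (hsp : ∀ i j, T i j = 0 ∨ (T i j).intDegree < 0)
    (X : Matrix (Fin n) (Fin m) (Polynomial k)) (M : Matrix (Fin m) (Fin m) (Polynomial k))
    (Y : Matrix (Fin m) (Fin n) (Polynomial k)) (hM : M.det ≠ 0)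
    (hT : T = X.map (algebraMap (Polynomial k) (RatFunc k)) *
      (M.map (algebraMap (Polynomial k) (RatFunc k)))⁻¹ *
      Y.map (algebraMap (Polynomial k) (RatFunc k)))
    (a : Fin n → Polynomial k) (da : ℕ) (hda : ∀ idx, (a idx).natDegree ≤ da)
    (ρ : ℕ)
    (hρ : ρ = Module.finrank (RatFunc k) (Submodule.span (RatFunc k)
      (Set.range fun i : ℕ =>
        (pseudoLin T)^[i] (fun idx => algebraMap (Polynomial k) (RatFunc k) (a idx))))) :
    ∃ η : Fin (ρ + 1) → Polynomial k, η ≠ 0 ∧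
      (∑ i : Fin (ρ + 1), algebraMap (Polynomial k) (RatFunc k) (η i) •
        (pseudoLin T)^[(i : ℕ)] (fun idx => algebraMap (Polynomial k) (RatFunc k) (a idx))) = 0 ∧
      ∀ i : Fin (ρ + 1),
        (η i).natDegree ≤ ρ * da + ρ * M.det.natDegree - (ρ * (ρ + 1) / 2 - (i : ℕ)) := by
  obtain ⟨η, hη0, hη, hdeg⟩ := exists_relation_realisation_bound_general hsp hM hT hda hρ
  refine ⟨η, hη0, ?_, fun i => ?_⟩
  · simp only [algebraMap_smul]
    exact hη
  · rcases eq_or_ne (η i) 0 with hi | hi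
    · simp [hi]
    · have hi_le : (i : ℕ) ≤ ρ * (ρ + 1) / 2 := by
        rw [Nat.le_div_iff_mul_le two_pos]
        linarith [i.is_le, ρ.le_mul_self]
      have := hdeg i hi
      omega
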